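/- Let a₁, a₂, b₁, b₂ ∈ ℂ and let X = X((a₁ a₂), I₂, …, I₂, I_{2×3}; (b₁, b₂)ᵀ) ∈ M_{2n+1}(ℂ) be as above. If a₂ = 0 then det(λ·I_{2n+1} − X) = λ·(λⁿ + (−1)^{n/2}·a₁b₁)², and if a₁ = 0 then det(λ·I_{2n+1} − X) = λ·(λⁿ + (−1)^{n/2}·a₂b₂)². In either case the characteristic polynomial of X has a repeated root, so X is not regular semisimple. -/

import Mathlib

open Matrix

/-- Read off the `(p, q)` entry (0-based, natural-number indices) of a matrix,
returning `0` out of range. -/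
noncomputable def fnOf {a b : ℕ} (B : Matrix (Fin a) (Fin b) ℂ) (p q : ℕ) : ℂ :=
  if h : p < a ∧ q < b then B ⟨p, h.1⟩ ⟨q, h.2⟩ else 0

/-- The `(i, j)` entry (0-based) of the matrix `X(A_1,…,A_{m/2}; A_{m+1}) ∈
M_{2n+1}(ℂ)` for the stable grading of order `m = n` on `so_{2n+1}(ℂ)`.
The block decomposition has row/column sizes `(1, 2, …, 2, 3, 2, …, 2, 1)`
(`m + 1` diagonal blocks), and the only possibly nonzero blocks are the
superdiagonal blocks `A_1, A_2, …, A_{m/2}, −s·A_{m/2}ᵀ·s, …, −s·A_1ᵀ·s`,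
the block `A_{m+1}` in block position `(m, 1)`, and the block
`−s·A_{m+1}ᵀ·s` in block position `(m+1, 2)` (1-based block positions).
Here `A1 = A_1` (1×2), `A i = A_i` for `2 ≤ i ≤ m/2 − 1` (2×2),
`Amid = A_{m/2}` (2×3) and `Alast = A_{m+1}` (2×1). -/
noncomputable def soEnt (n : ℕ) (A1 : Matrix (Fin 1) (Fin 2) ℂ)
    (A : ℕ → Matrix (Fin 2) (Fin 2) ℂ)
    (Amid : Matrix (Fin 2) (Fin 3) ℂ) (Alast : Matrix (Fin 2) (Fin 1) ℂ)
    (i j : ℕ) : ℂ :=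
  -- block (1,2): A_1
  if i = 0 ∧ 1 ≤ j ∧ j ≤ 2 then fnOf A1 0 (j - 1)
  -- blocks (r, r+1) for 2 ≤ r ≤ m/2 − 1 (1-based): A_r
  else if 1 ≤ i ∧ i ≤ n - 4 ∧ 2 * ((i + 1) / 2) + 1 ≤ j ∧ j ≤ 2 * ((i + 1) / 2) + 2 then
    fnOf (A ((i + 1) / 2 + 1)) (i + 1 - 2 * ((i + 1) / 2)) (j - (2 * ((i + 1) / 2) + 1))
  -- block (m/2, m/2+1): A_{m/2}
  else if n - 3 ≤ i ∧ i ≤ n - 2 ∧ n - 1 ≤ j ∧ j ≤ n + 1 then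
    fnOf Amid (i - (n - 3)) (j - (n - 1))
  -- block (m/2+1, m/2+2): −s·A_{m/2}ᵀ·s
  else if n - 1 ≤ i ∧ i ≤ n + 1 ∧ n + 2 ≤ j ∧ j ≤ n + 3 then
    -(fnOf Amid (n + 3 - j) (n + 1 - i))
  -- blocks (r, r+1) for m/2+2 ≤ r ≤ m−1 (1-based): −s·A_{m+1−r}ᵀ·s
  else if n + 2 ≤ i ∧ i ≤ 2 * n - 3 ∧ 2 * (i / 2) + 2 ≤ j ∧ j ≤ 2 * (i / 2) + 3 then
    -(fnOf (A (n - i / 2)) (2 * (i / 2) + 3 - j) (2 * (i / 2) + 1 - i))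
  -- block (m, m+1): −s·A_1ᵀ·s
  else if 2 * n - 2 ≤ i ∧ i ≤ 2 * n - 1 ∧ j = 2 * n then
    -(fnOf A1 0 (2 * n - 1 - i))
  -- block (m, 1): A_{m+1}
  else if 2 * n - 2 ≤ i ∧ i ≤ 2 * n - 1 ∧ j = 0 then
    fnOf Alast (i - (2 * n - 2)) 0
  -- block (m+1, 2): −s·A_{m+1}ᵀ·s
  else if i = 2 * n ∧ 1 ≤ j ∧ j ≤ 2 then
    -(fnOf Alast (2 - j) 0)
  else 0

/-- The matrix `X(A_1,…,A_{m/2}; A_{m+1}) ∈ M_{2n+1}(ℂ)` (with `m = n` even). -/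
noncomputable def soMat (n : ℕ) (A1 : Matrix (Fin 1) (Fin 2) ℂ)
    (A : ℕ → Matrix (Fin 2) (Fin 2) ℂ)
    (Amid : Matrix (Fin 2) (Fin 3) ℂ) (Alast : Matrix (Fin 2) (Fin 1) ℂ) :
    Matrix (Fin (2 * n + 1)) (Fin (2 * n + 1)) ℂ :=
  Matrix.of fun i j => soEnt n A1 A Amid Alast (i : ℕ) (j : ℕ)

lemma iteL {c : Prop} [Decidable c] {a b r : ℂ} (h : c → a = r) (h' : ¬ c → b = r) :
    (if c then a else b) = r := by split_ifs <;> tauto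

lemma iteN {c : Prop} [Decidable c] {a b r : ℂ} (h : c → -a = r) (h' : ¬ c → -b = r) :
    -(if c then a else b) = r := by split_ifs <;> tauto

lemma iteR {c : Prop} [Decidable c] {a b r : ℂ} (h : c → r = a) (h' : ¬ c → r = b) :
    r = (if c then a else b) := by split_ifs <;> tauto


/-- weighted directed cycle determinant -/
lemma cyc_det (n : ℕ) (hn : 2 ≤ n) (x : ℂ) (w : ℕ → ℂ) :
    (Matrix.of fun i j : Fin n => (if (i : ℕ) = j then x else 0) -
      (if (j : ℕ) = i + 1 ∨ ((i : ℕ) = n - 1 ∧ (j : ℕ) = 0) then w i else 0)).det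
    = x ^ n - ∏ k ∈ Finset.range n, w k := by
  obtain ⟨N, rfl⟩ : ∃ N, n = N + 1 := ⟨n - 1, by omega⟩
  rw [Matrix.det_succ_column_zero, ← Finset.sum_subset (Finset.subset_univ {0, Fin.last N})]
  · have h0 : (0 : Fin (N+1)) ≠ Fin.last N := by
      intro h; have := congrArg Fin.val h; simp at this; omega
    rw [Finset.sum_pair h0, Matrix.det_of_isUpperTriangular, Matrix.det_of_isLowerTriangular]
    · have hN : N ≠ 0 := by omega
      have e1 : ∀ k : Fin N, ¬ ((k : ℕ) = N) := fun k => by have := k.2; omega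
      simp [Matrix.submatrix, hN, Fin.succAbove_last, hN.symm, e1, Finset.prod_neg,
        Finset.prod_range_succ, Finset.prod_range (n := N)]
      have : ((-1 : ℂ)^N) * (-1)^N = 1 := by rw [← mul_pow]; simp
      rw [pow_succ]
      linear_combination (-(w N * ∏ i : Fin N, w i)) * this
    · intro i j hij
      have : (i : ℕ) < j := hij
      have hi := i.2
      simp [Matrix.submatrix, Fin.succAbove_last]
      grind
    · intro i j hij
      have : (j : ℕ) < i := hij
      simp [Matrix.submatrix]
      grind
  · intro i _ hi
    have h1 : (i : ℕ) ≠ 0 := fun h => hi (by simp [Fin.ext_iff, h])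
    have h2 : (i : ℕ) ≠ N := fun h => hi (by simp [Fin.ext_iff, h])
    simp [h1, h2]

lemma two_cyc (n : ℕ) (hn : 2 ≤ n) (x : ℂ) (u v : ℕ → ℂ) (E : ℕ → ℕ → ℂ) (f g : ℕ → ℕ) (c : ℕ)
    (hf : ∀ k < n, f k < 2 * n + 1) (hg : ∀ k < n, g k < 2 * n + 1) (hc : c < 2 * n + 1)
    (ff : ∀ k < n, ∀ l < n, f k = f l → k = l)
    (gg : ∀ k < n, ∀ l < n, g k = g l → k = l)
    (fg : ∀ k < n, ∀ l < n, f k ≠ g l)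
    (fc : ∀ k < n, f k ≠ c) (gc : ∀ k < n, g k ≠ c)
    (Eff : ∀ k < n, ∀ l < n, E (f k) (f l) =
      if l = k + 1 ∨ (k = n - 1 ∧ l = 0) then u k else 0)
    (Egg : ∀ k < n, ∀ l < n, E (g k) (g l) =
      if l = k + 1 ∨ (k = n - 1 ∧ l = 0) then v k else 0)
    (Efg : ∀ k < n, ∀ l < n, E (f k) (g l) = 0)
    (Ec : ∀ j < 2 * n + 1, E j c = 0) :
    (x • (1 : Matrix (Fin (2 * n + 1)) (Fin (2 * n + 1)) ℂ) -
      Matrix.of fun i j : Fin (2 * n + 1) => E (i : ℕ) (j : ℕ)).det =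
    x * ((x ^ n - ∏ k ∈ Finset.range n, u k) * (x ^ n - ∏ k ∈ Finset.range n, v k)) := by
  let e0 : (Fin n ⊕ Fin n) ⊕ Unit → Fin (2 * n + 1) :=
    Sum.elim (Sum.elim (fun k => ⟨f k, hf k k.2⟩) (fun k => ⟨g k, hg k k.2⟩)) (fun _ => ⟨c, hc⟩)
  have hinj : Function.Injective e0 := by
    rintro ((k | k) | k) ((l | l) | l) h <;> simp [e0] at h ⊢
    · exact Fin.ext (ff _ k.2 _ l.2 h)
    · exact fg _ k.2 _ l.2 h
    · exact fc _ k.2 h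
    · exact fg _ l.2 _ k.2 h.symm
    · exact Fin.ext (gg _ k.2 _ l.2 h)
    · exact gc _ k.2 h
    · exact fc _ l.2 h.symm
    · exact gc _ l.2 h.symm
  have hbij : Function.Bijective e0 := by
    rw [Fintype.bijective_iff_injective_and_card]
    refine ⟨hinj, ?_⟩
    simp; omega
  let e := Equiv.ofBijective e0 hbij
  rw [← Matrix.det_submatrix_equiv_self e, ← cyc_det n hn, ← cyc_det n hn]
  set M := (x • (1 : Matrix (Fin (2 * n + 1)) (Fin (2 * n + 1)) ℂ) -
      Matrix.of fun i j : Fin (2 * n + 1) => E (i : ℕ) (j : ℕ)).submatrix e e with hM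
  have h12 : M.toBlocks₁₂ = 0 := by
    ext k l
    have : e (Sum.inl k) ≠ e (Sum.inr l) := by simp
    have h2 : e (Sum.inr l) = ⟨c, hc⟩ := rfl
    rw [h2] at this
    simp [hM, Matrix.toBlocks₁₂, h2, Matrix.one_apply_ne this, Ec _ (e (Sum.inl k)).2]
  have h22 : M.toBlocks₂₂ = Matrix.of fun _ _ => x := by
    ext k l
    have h2 : e (Sum.inr l) = ⟨c, hc⟩ := rfl
    simp [hM, Matrix.toBlocks₂₂, h2, Ec _ hc]
  have k12 : M.toBlocks₁₁.toBlocks₁₂ = 0 := by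
    ext k l
    have : e (Sum.inl (Sum.inl k)) ≠ e (Sum.inl (Sum.inr l)) := by simp
    have h1 : e (Sum.inl (Sum.inl k)) = ⟨f k, hf k k.2⟩ := rfl
    have h2 : e (Sum.inl (Sum.inr l)) = ⟨g l, hg l l.2⟩ := rfl
    rw [h1, h2] at this
    simp [hM, Matrix.toBlocks₁₂, Matrix.toBlocks₁₁, h1, h2, Matrix.one_apply_ne this,
      Efg _ k.2 _ l.2]
  have k11 : M.toBlocks₁₁.toBlocks₁₁ = Matrix.of fun i j : Fin n =>
      (if (i : ℕ) = j then x else 0) -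
      (if (j : ℕ) = i + 1 ∨ ((i : ℕ) = n - 1 ∧ (j : ℕ) = 0) then u i else 0) := by
    ext k l
    have h1 : ∀ k, e (Sum.inl (Sum.inl k)) = ⟨f k, hf k k.2⟩ := fun _ => rfl
    have h3 : (f k = f l) ↔ (k : ℕ) = l := ⟨ff _ k.2 _ l.2, fun h => by rw [h]⟩
    simp [hM, Matrix.toBlocks₁₁, h1, Eff _ k.2 _ l.2, Matrix.one_apply, Fin.ext_iff, h3]
  have k22 : M.toBlocks₁₁.toBlocks₂₂ = Matrix.of fun i j : Fin n =>
      (if (i : ℕ) = j then x else 0) -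
      (if (j : ℕ) = i + 1 ∨ ((i : ℕ) = n - 1 ∧ (j : ℕ) = 0) then v i else 0) := by
    ext k l
    have h1 : ∀ k, e (Sum.inl (Sum.inr k)) = ⟨g k, hg k k.2⟩ := fun _ => rfl
    have h3 : (g k = g l) ↔ (k : ℕ) = l := ⟨gg _ k.2 _ l.2, fun h => by rw [h]⟩
    simp [hM, Matrix.toBlocks₁₁, Matrix.toBlocks₂₂, h1, Egg _ k.2 _ l.2, Matrix.one_apply, Fin.ext_iff, h3]
  rw [← Matrix.fromBlocks_toBlocks M, h12, Matrix.det_fromBlocks_zero₁₂, h22,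
    ← Matrix.fromBlocks_toBlocks M.toBlocks₁₁, k12, Matrix.det_fromBlocks_zero₁₂, k11, k22]
  simp
  ring

/-- explicit entries -/
noncomputable def ent (n : ℕ) (a1 a2 b1 b2 : ℂ) (i j : ℕ) : ℂ :=
  if i = 0 then (if j = 1 then a1 else if j = 2 then a2 else 0)
  else if i ≤ n - 3 then (if j = i + 2 then 1 else 0)
  else if i = n - 2 then (if j = n + 1 then 1 else 0)
  else if i = n - 1 then (if j = n + 2 then -1 else 0)
  else if i = n then 0
  else if i = n + 1 then (if j = n + 3 then -1 else 0)
  else if i ≤ 2 * n - 3 then (if j = i + 2 then -1 else 0)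
  else if i = 2 * n - 2 then (if j = 0 then b1 else if j = 2 * n then -a2 else 0)
  else if i = 2 * n - 1 then (if j = 0 then b2 else if j = 2 * n then -a1 else 0)
  else if i = 2 * n then (if j = 1 then -b2 else if j = 2 then -b1 else 0)
  else 0

lemma fn1 (a b : ℂ) (p q : ℕ) : fnOf !![a, b] p q =
    if p = 0 then (if q = 0 then a else if q = 1 then b else 0) else 0 := by
  unfold fnOf
  rcases p with _ | p <;> rcases q with _ | _ | q <;> simp

lemma fn2 (a b : ℂ) (p q : ℕ) : fnOf !![a; b] p q =
    if q = 0 then (if p = 0 then a else if p = 1 then b else 0) else 0 := by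
  unfold fnOf
  rcases q with _ | q <;> rcases p with _ | _ | p <;> simp

lemma fn3 (p q : ℕ) : fnOf (1 : Matrix (Fin 2) (Fin 2) ℂ) p q =
    if p = q ∧ p < 2 then 1 else 0 := by
  unfold fnOf
  simp only [Matrix.one_apply, Fin.mk.injEq]
  grind

lemma fn4 (p q : ℕ) : fnOf (!![1, 0, 0; 0, 0, 1] : Matrix (Fin 2) (Fin 3) ℂ) p q =
    if (p = 0 ∧ q = 0) ∨ (p = 1 ∧ q = 2) then 1 else 0 := by
  unfold fnOf
  rcases p with _ | _ | p <;> rcases q with _ | _ | _ | q <;> simp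

set_option maxHeartbeats 4000000 in
lemma soEnt_eq (m : ℕ) (hm : 2 ≤ m) (a1 a2 b1 b2 : ℂ) (i j : ℕ) :
    soEnt (2 * m) !![a1, a2] (fun _ => 1) !![1, 0, 0; 0, 0, 1] !![b1; b2] i j
     = ent (2 * m) a1 a2 b1 b2 i j := by
  unfold soEnt
  simp only [fn1, fn2, fn3, fn4]
  unfold ent
  repeat' first | rfl | (exfalso; omega) | exact absurd trivial ‹¬ True› | exact neg_zero | exact neg_zero.symm | refine iteL (fun _ => ?_) (fun _ => ?_) | refine iteN (fun _ => ?_) (fun _ => ?_) | refine iteR (fun _ => ?_) (fun _ => ?_)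


lemma prodA (m : ℕ) (hm : 2 ≤ m) (a b : ℂ) :
    ∏ k ∈ Finset.range (2 * m), (if k = 0 then a else if k < m then 1 else
      if k < 2 * m - 1 then -1 else b) = -((-1) ^ m * a * b) := by
  obtain ⟨r, rfl⟩ : ∃ r, m = r + 1 := ⟨m - 1, by omega⟩
  generalize hF : (fun k : ℕ => (if k = 0 then a else if k < r + 1 then (1 : ℂ) else
      if k < 2 * (r + 1) - 1 then -1 else b)) = F
  have hF' : ∀ k, F k = (if k = 0 then a else if k < r + 1 then (1 : ℂ) else
      if k < 2 * (r + 1) - 1 then -1 else b) := fun k => by rw [← hF]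
  have e0 : F 0 = a := by simp [hF']
  have e1 : ∏ k ∈ Finset.range r, F (1 + k) = 1 := by
    apply Finset.prod_eq_one
    intro k hk
    have := Finset.mem_range.1 hk
    rw [hF', if_neg (by omega), if_pos (by omega)]
  have e2 : ∏ k ∈ Finset.range r, F (1 + r + k) = (-1) ^ r := by
    rw [Finset.prod_eq_pow_card (b := (-1 : ℂ)), Finset.card_range]
    intro k hk
    have := Finset.mem_range.1 hk
    rw [hF', if_neg (by omega), if_neg (by omega), if_pos (by omega)]
  have e3 : F (1 + r + r) = b := by
    rw [hF', if_neg (by omega), if_neg (by omega), if_neg (by omega)]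
  rw [show 2 * (r + 1) = 1 + r + r + 1 by ring, Finset.prod_range_succ, Finset.prod_range_add,
    Finset.prod_range_add, e1, e2, e3, Finset.prod_range_one, e0]
  ring

lemma prodB (m : ℕ) (t : ℕ) (ht : t + 1 = m) (a b : ℂ) :
    ∏ k ∈ Finset.range (2 * m), (if k < t then (1 : ℂ) else
      if k < 2 * m - 2 then -1 else if k = 2 * m - 2 then -a else -b) = -((-1) ^ m * a * b) := by
  subst ht
  generalize hF : (fun k : ℕ => (if k < t then (1 : ℂ) else
      if k < 2 * (t + 1) - 2 then -1 else if k = 2 * (t + 1) - 2 then -a else -b)) = F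
  have hF' : ∀ k, F k = (if k < t then (1 : ℂ) else
      if k < 2 * (t + 1) - 2 then -1 else if k = 2 * (t + 1) - 2 then -a else -b) :=
    fun k => by rw [← hF]
  have e1 : ∏ k ∈ Finset.range t, F k = 1 := by
    apply Finset.prod_eq_one
    intro k hk
    have := Finset.mem_range.1 hk
    rw [hF', if_pos (by omega)]
  have e2 : ∏ k ∈ Finset.range t, F (t + k) = (-1) ^ t := by
    rw [Finset.prod_eq_pow_card (b := (-1 : ℂ)), Finset.card_range]
    intro k hk
    have := Finset.mem_range.1 hk
    rw [hF', if_neg (by omega), if_pos (by omega)]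
  have e3 : F (t + t) = -a := by
    rw [hF', if_neg (by omega), if_neg (by omega), if_pos (by omega)]
  have e4 : F (t + t + 1) = -b := by
    rw [hF', if_neg (by omega), if_neg (by omega), if_neg (by omega)]
  rw [show 2 * (t + 1) = t + t + 1 + 1 by ring, Finset.prod_range_succ, Finset.prod_range_succ,
    Finset.prod_range_add, e1, e2, e3, e4]
  ring

set_option maxHeartbeats 4000000 in
lemma detA (m : ℕ) (hm : 2 ≤ m) (a b1 b2 x : ℂ) :
    (x • (1 : Matrix (Fin (2 * (2 * m) + 1)) (Fin (2 * (2 * m) + 1)) ℂ) -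
      Matrix.of fun i j : Fin (2 * (2 * m) + 1) => ent (2 * m) a 0 b1 b2 (i : ℕ) (j : ℕ)).det =
    x * (x ^ (2 * m) + (-1) ^ m * a * b1) ^ 2 := by
  rw [two_cyc (2 * m) (by omega) x
    (fun k => if k = 0 then a else if k < m then 1 else if k < 2 * m - 1 then -1 else b1)
    (fun k => if k < m - 1 then 1 else if k < 2 * m - 2 then -1 else
      if k = 2 * m - 2 then -a else -b1)
    (ent (2 * m) a 0 b1 b2)
    (fun k => if k = 0 then 0 else if k ≤ m then 2 * k - 1 else 2 * k)
    (fun k => if k < m - 1 then 2 * k + 2 else if k < 2 * m - 1 then 2 * k + 3 else 4 * m)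
    (2 * m)]
  · rw [prodA m hm, prodB m _ (by omega)]
    ring
  · grind
  · grind
  · omega
  · grind
  · grind
  · grind
  · grind
  · grind
  · intro k hk l hl
    obtain ⟨p, hp⟩ : ∃ p, p = (if k = 0 then 0 else if k ≤ m then 2 * k - 1 else 2 * k) := ⟨_, rfl⟩
    have hp2 : (k = 0 ∧ p = 0) ∨ (1 ≤ k ∧ k ≤ m ∧ p = 2 * k - 1) ∨ (m < k ∧ p = 2 * k) := by grind
    obtain ⟨q, hq⟩ : ∃ q, q = (if l = 0 then 0 else if l ≤ m then 2 * l - 1 else 2 * l) := ⟨_, rfl⟩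
    have hq2 : (l = 0 ∧ q = 0) ∨ (1 ≤ l ∧ l ≤ m ∧ q = 2 * l - 1) ∨ (m < l ∧ q = 2 * l) := by grind
    simp only [← hp, ← hq]
    clear hp hq
    unfold ent
    repeat' first | rfl | (exfalso; omega) | exact absurd trivial ‹¬ True› | exact neg_zero | exact neg_zero.symm | refine iteL (fun _ => ?_) (fun _ => ?_) | refine iteN (fun _ => ?_) (fun _ => ?_) | refine iteR (fun _ => ?_) (fun _ => ?_)
  · intro k hk l hl
    obtain ⟨p, hp⟩ : ∃ p, p = (if k < m - 1 then 2 * k + 2 else if k < 2 * m - 1 then 2 * k + 3 else 4 * m) := ⟨_, rfl⟩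
    have hp2 : (k < m - 1 ∧ p = 2 * k + 2) ∨ (m - 1 ≤ k ∧ k < 2 * m - 1 ∧ p = 2 * k + 3) ∨ (k = 2 * m - 1 ∧ p = 4 * m) := by grind
    obtain ⟨q, hq⟩ : ∃ q, q = (if l < m - 1 then 2 * l + 2 else if l < 2 * m - 1 then 2 * l + 3 else 4 * m) := ⟨_, rfl⟩
    have hq2 : (l < m - 1 ∧ q = 2 * l + 2) ∨ (m - 1 ≤ l ∧ l < 2 * m - 1 ∧ q = 2 * l + 3) ∨ (l = 2 * m - 1 ∧ q = 4 * m) := by grind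
    simp only [← hp, ← hq]
    clear hp hq
    unfold ent
    repeat' first | rfl | (exfalso; omega) | exact absurd trivial ‹¬ True› | exact neg_zero | exact neg_zero.symm | refine iteL (fun _ => ?_) (fun _ => ?_) | refine iteN (fun _ => ?_) (fun _ => ?_) | refine iteR (fun _ => ?_) (fun _ => ?_)
  · intro k hk l hl
    obtain ⟨p, hp⟩ : ∃ p, p = (if k = 0 then 0 else if k ≤ m then 2 * k - 1 else 2 * k) := ⟨_, rfl⟩
    have hp2 : (k = 0 ∧ p = 0) ∨ (1 ≤ k ∧ k ≤ m ∧ p = 2 * k - 1) ∨ (m < k ∧ p = 2 * k) := by grind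
    obtain ⟨q, hq⟩ : ∃ q, q = (if l < m - 1 then 2 * l + 2 else if l < 2 * m - 1 then 2 * l + 3 else 4 * m) := ⟨_, rfl⟩
    have hq2 : (l < m - 1 ∧ q = 2 * l + 2) ∨ (m - 1 ≤ l ∧ l < 2 * m - 1 ∧ q = 2 * l + 3) ∨ (l = 2 * m - 1 ∧ q = 4 * m) := by grind
    simp only [← hp, ← hq]
    clear hp hq
    unfold ent
    repeat' first | rfl | (exfalso; omega) | exact absurd trivial ‹¬ True› | exact neg_zero | exact neg_zero.symm | refine iteL (fun _ => ?_) (fun _ => ?_) | refine iteN (fun _ => ?_) (fun _ => ?_) | refine iteR (fun _ => ?_) (fun _ => ?_)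
  · intro j hj
    unfold ent
    repeat' first | rfl | (exfalso; omega) | exact absurd trivial ‹¬ True› | exact neg_zero | exact neg_zero.symm | refine iteL (fun _ => ?_) (fun _ => ?_) | refine iteN (fun _ => ?_) (fun _ => ?_) | refine iteR (fun _ => ?_) (fun _ => ?_)

set_option maxHeartbeats 4000000 in
lemma detB (m : ℕ) (hm : 2 ≤ m) (a b1 b2 x : ℂ) :
    (x • (1 : Matrix (Fin (2 * (2 * m) + 1)) (Fin (2 * (2 * m) + 1)) ℂ) -
      Matrix.of fun i j : Fin (2 * (2 * m) + 1) => ent (2 * m) 0 a b1 b2 (i : ℕ) (j : ℕ)).det =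
    x * (x ^ (2 * m) + (-1) ^ m * a * b2) ^ 2 := by
  rw [two_cyc (2 * m) (by omega) x
    (fun k => if k = 0 then a else if k < m then 1 else if k < 2 * m - 1 then -1 else b2)
    (fun k => if k < m - 1 then 1 else if k < 2 * m - 2 then -1 else
      if k = 2 * m - 2 then -a else -b2)
    (ent (2 * m) 0 a b1 b2)
    (fun k => if k = 0 then 0 else if k < m then 2 * k else 2 * k + 1)
    (fun k => if k < m then 2 * k + 1 else 2 * k + 2)
    (2 * m)]
  · rw [prodA m hm, prodB m _ (by omega)]
    ring
  · grind
  · grind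
  · omega
  · grind
  · grind
  · grind
  · grind
  · grind
  · intro k hk l hl
    obtain ⟨p, hp⟩ : ∃ p, p = (if k = 0 then 0 else if k < m then 2 * k else 2 * k + 1) := ⟨_, rfl⟩
    have hp2 : (k = 0 ∧ p = 0) ∨ (1 ≤ k ∧ k < m ∧ p = 2 * k) ∨ (m ≤ k ∧ p = 2 * k + 1) := by grind
    obtain ⟨q, hq⟩ : ∃ q, q = (if l = 0 then 0 else if l < m then 2 * l else 2 * l + 1) := ⟨_, rfl⟩
    have hq2 : (l = 0 ∧ q = 0) ∨ (1 ≤ l ∧ l < m ∧ q = 2 * l) ∨ (m ≤ l ∧ q = 2 * l + 1) := by grind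
    simp only [← hp, ← hq]
    clear hp hq
    unfold ent
    repeat' first | rfl | (exfalso; omega) | exact absurd trivial ‹¬ True› | exact neg_zero | exact neg_zero.symm | refine iteL (fun _ => ?_) (fun _ => ?_) | refine iteN (fun _ => ?_) (fun _ => ?_) | refine iteR (fun _ => ?_) (fun _ => ?_)
  · intro k hk l hl
    obtain ⟨p, hp⟩ : ∃ p, p = (if k < m then 2 * k + 1 else 2 * k + 2) := ⟨_, rfl⟩
    have hp2 : (k < m ∧ p = 2 * k + 1) ∨ (m ≤ k ∧ p = 2 * k + 2) := by grind
    obtain ⟨q, hq⟩ : ∃ q, q = (if l < m then 2 * l + 1 else 2 * l + 2) := ⟨_, rfl⟩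
    have hq2 : (l < m ∧ q = 2 * l + 1) ∨ (m ≤ l ∧ q = 2 * l + 2) := by grind
    simp only [← hp, ← hq]
    clear hp hq
    unfold ent
    repeat' first | rfl | (exfalso; omega) | exact absurd trivial ‹¬ True› | exact neg_zero | exact neg_zero.symm | refine iteL (fun _ => ?_) (fun _ => ?_) | refine iteN (fun _ => ?_) (fun _ => ?_) | refine iteR (fun _ => ?_) (fun _ => ?_)
  · intro k hk l hl
    obtain ⟨p, hp⟩ : ∃ p, p = (if k = 0 then 0 else if k < m then 2 * k else 2 * k + 1) := ⟨_, rfl⟩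
    have hp2 : (k = 0 ∧ p = 0) ∨ (1 ≤ k ∧ k < m ∧ p = 2 * k) ∨ (m ≤ k ∧ p = 2 * k + 1) := by grind
    obtain ⟨q, hq⟩ : ∃ q, q = (if l < m then 2 * l + 1 else 2 * l + 2) := ⟨_, rfl⟩
    have hq2 : (l < m ∧ q = 2 * l + 1) ∨ (m ≤ l ∧ q = 2 * l + 2) := by grind
    simp only [← hp, ← hq]
    clear hp hq
    unfold ent
    repeat' first | rfl | (exfalso; omega) | exact absurd trivial ‹¬ True› | exact neg_zero | exact neg_zero.symm | refine iteL (fun _ => ?_) (fun _ => ?_) | refine iteN (fun _ => ?_) (fun _ => ?_) | refine iteR (fun _ => ?_) (fun _ => ?_)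
  · intro j hj
    unfold ent
    repeat' first | rfl | (exfalso; omega) | exact absurd trivial ‹¬ True› | exact neg_zero | exact neg_zero.symm | refine iteL (fun _ => ?_) (fun _ => ?_) | refine iteN (fun _ => ?_) (fun _ => ?_) | refine iteR (fun _ => ?_) (fun _ => ?_)

lemma not_nodup {N : ℕ} (X : Matrix (Fin N) (Fin N) ℂ) (n : ℕ) (hn : n ≠ 0) (c : ℂ)
    (h : ∀ x : ℂ, (x • (1 : Matrix (Fin N) (Fin N) ℂ) - X).det = x * (x ^ n + c) ^ 2) :
    ¬ X.charpoly.roots.Nodup := by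
  have hp : X.charpoly = Polynomial.X * (Polynomial.X ^ n + Polynomial.C c) ^ 2 := by
    apply Polynomial.funext
    intro x
    rw [Matrix.eval_charpoly, Matrix.scalar_apply, ← Matrix.smul_one_eq_diagonal, h]
    simp
  obtain ⟨z, hz⟩ := IsAlgClosed.exists_pow_nat_eq (-c) (Nat.pos_of_ne_zero hn)
  intro hnd
  have h1 := Multiset.nodup_iff_count_le_one.1 hnd z
  rw [Polynomial.count_roots] at h1
  have h2 : 2 ≤ X.charpoly.rootMultiplicity z := by
    rw [Polynomial.le_rootMultiplicity_iff X.charpoly_monic.ne_zero, hp]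
    apply Dvd.dvd.mul_left
    apply pow_dvd_pow_of_dvd
    rw [Polynomial.dvd_iff_isRoot]
    simp [hz]
  omega

/-- Let `X = X((a₁ a₂), I₂, …, I₂, I_{2×3}; (b₁, b₂)ᵀ) ∈ M_{2n+1}(ℂ)`. If
`a₂ = 0` then `det(λI − X) = λ·(λⁿ + (−1)^{n/2}·a₁b₁)²`, and if `a₁ = 0` then
`det(λI − X) = λ·(λⁿ + (−1)^{n/2}·a₂b₂)²`. In either case the characteristic
polynomial of `X` has a repeated root, so `X` is not regular semisimple. -/
theorem stmt7 (n : ℕ) (hn : 4 ≤ n) (hne : Even n) (a1 a2 b1 b2 : ℂ)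
    (X : Matrix (Fin (2 * n + 1)) (Fin (2 * n + 1)) ℂ)
    (hX : X = soMat n !![a1, a2] (fun _ => 1) !![1, 0, 0; 0, 0, 1] !![b1; b2]) :
    (a2 = 0 → ∀ lam : ℂ,
      (lam • (1 : Matrix (Fin (2 * n + 1)) (Fin (2 * n + 1)) ℂ) - X).det
        = lam * (lam ^ n + (-1) ^ (n / 2) * a1 * b1) ^ 2) ∧
    (a1 = 0 → ∀ lam : ℂ,
      (lam • (1 : Matrix (Fin (2 * n + 1)) (Fin (2 * n + 1)) ℂ) - X).det
        = lam * (lam ^ n + (-1) ^ (n / 2) * a2 * b2) ^ 2) ∧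
    ((a1 = 0 ∨ a2 = 0) → ¬ X.charpoly.roots.Nodup) := by
  obtain ⟨m, rfl⟩ := hne.two_dvd
  have hm : 2 ≤ m := by omega
  have hX' : X = Matrix.of fun i j : Fin (2 * (2 * m) + 1) =>
      ent (2 * m) a1 a2 b1 b2 (i : ℕ) (j : ℕ) := by
    rw [hX]
    ext i j
    exact soEnt_eq m hm a1 a2 b1 b2 i j
  have hd : 2 * m / 2 = m := by omega
  rw [hd]
  have hA : a2 = 0 → ∀ lam : ℂ,
      (lam • (1 : Matrix (Fin (2 * (2 * m) + 1)) (Fin (2 * (2 * m) + 1)) ℂ) - X).det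
        = lam * (lam ^ (2 * m) + (-1) ^ m * a1 * b1) ^ 2 := by
    intro h lam
    rw [hX', h]
    exact detA m hm a1 b1 b2 lam
  have hB : a1 = 0 → ∀ lam : ℂ,
      (lam • (1 : Matrix (Fin (2 * (2 * m) + 1)) (Fin (2 * (2 * m) + 1)) ℂ) - X).det
        = lam * (lam ^ (2 * m) + (-1) ^ m * a2 * b2) ^ 2 := by
    intro h lam
    rw [hX', h]
    exact detB m hm a2 b1 b2 lam
  refine ⟨hA, hB, ?_⟩
  rintro (h | h)
  · exact not_nodup X (2 * m) (by omega) _ (hB h)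
  · exact not_nodup X (2 * m) (by omega) _ (hA h)
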